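/- For every positive integer n, let A₁ be the set of permutations w of {1,...,n} with w(1) = 1. Then there exists a bijection Ψ₁ from A₁ to A₁ such that for every w ∈ A₁, sign(Ψ₁(w)) = sign(w) and depth(w) = drp(Ψ₁(w)). -/

import Mathlib

open Finset

/-- The one-line notation value of `π` at position `k ∈ {1,…,n}`:
`oneLine π k = π(k)` with `1`-indexed positions and values. -/
def oneLine {n : ℕ} (π : Equiv.Perm (Fin n)) (k : ℕ) : ℕ :=
  if h : k - 1 < n then ((π ⟨k - 1, h⟩ : Fin n) : ℕ) + 1 else k

/-- `SUC(π) = {i ∈ {1,…,n-1} : π(i+1) = π(i)+1}` (position set). -/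
def SUC {n : ℕ} (π : Equiv.Perm (Fin n)) : Finset ℕ :=
  (Finset.Icc 1 (n - 1)).filter (fun i => oneLine π (i + 1) = oneLine π i + 1)

/-- `FIX(π) = {i ∈ {1,…,n-1} : π(i) = i}` (position set). -/
def FIX {n : ℕ} (π : Equiv.Perm (Fin n)) : Finset ℕ :=
  (Finset.Icc 1 (n - 1)).filter (fun i => oneLine π i = i)

/-- `Asc₂(π) = {π(i+1) : i ∈ {1,…,n-1}, π(i+1) ≥ π(i)+2}` (value set). -/
def Asc2 {n : ℕ} (π : Equiv.Perm (Fin n)) : Finset ℕ :=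
  ((Finset.Icc 1 (n - 1)).filter (fun i => oneLine π i + 2 ≤ oneLine π (i + 1))).image
    (fun i => oneLine π (i + 1))

/-- `Des(π) = {π(i+1) : i ∈ {1,…,n-1}, π(i) > π(i+1)}` (value set). -/
def DesSet {n : ℕ} (π : Equiv.Perm (Fin n)) : Finset ℕ :=
  ((Finset.Icc 1 (n - 1)).filter (fun i => oneLine π (i + 1) < oneLine π i)).image
    (fun i => oneLine π (i + 1))

/-- `Suc(π) = {π(i+1) : i ∈ {1,…,n-1}, π(i+1) = π(i)+1}` (value set). -/
def SucSet {n : ℕ} (π : Equiv.Perm (Fin n)) : Finset ℕ :=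
  ((Finset.Icc 1 (n - 1)).filter (fun i => oneLine π (i + 1) = oneLine π i + 1)).image
    (fun i => oneLine π (i + 1))

/-- `Aexc(π) = {π(i) : i ∈ {2,…,n}, π(i) < i}` (value set). -/
def Aexc {n : ℕ} (π : Equiv.Perm (Fin n)) : Finset ℕ :=
  ((Finset.Icc 2 n).filter (fun i => oneLine π i < i)).image (fun i => oneLine π i)

/-- `Êxc(π) = {π(i) : i ∈ {2,…,n}, π(i) > i}` (value set). -/
def ExcHat {n : ℕ} (π : Equiv.Perm (Fin n)) : Finset ℕ :=
  ((Finset.Icc 2 n).filter (fun i => i < oneLine π i)).image (fun i => oneLine π i)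

/-- `F̂ix(π) = {π(i) : i ∈ {2,…,n}, π(i) = i}` (value set). -/
def FixHat {n : ℕ} (π : Equiv.Perm (Fin n)) : Finset ℕ :=
  ((Finset.Icc 2 n).filter (fun i => oneLine π i = i)).image (fun i => oneLine π i)

/-- `depth(π) = ∑_{i : π(i) > i} (π(i) − i)`. -/
def depthStat {n : ℕ} (π : Equiv.Perm (Fin n)) : ℕ :=
  ∑ i ∈ (Finset.Icc 1 n).filter (fun i => i < oneLine π i), (oneLine π i - i)

/-- `drp(π) = ∑_{i ∈ {1,…,n-1} : π(i) > π(i+1)} (π(i) − π(i+1))`. -/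
def drpStat {n : ℕ} (π : Equiv.Perm (Fin n)) : ℕ :=
  ∑ i ∈ (Finset.Icc 1 (n - 1)).filter (fun i => oneLine π (i + 1) < oneLine π i),
    (oneLine π i - oneLine π (i + 1))

/-- `exc(π) = |{i ∈ {1,…,n} : π(i) > i}|`. -/
def excNum {n : ℕ} (π : Equiv.Perm (Fin n)) : ℕ :=
  ((Finset.Icc 1 n).filter (fun i => i < oneLine π i)).card

/-- `nexc(π) = |{i ∈ {1,…,n} : π(i) < i}|`. -/
def nexcNum {n : ℕ} (π : Equiv.Perm (Fin n)) : ℕ :=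
  ((Finset.Icc 1 n).filter (fun i => oneLine π i < i)).card

/-- `des(π) = |{i ∈ {1,…,n-1} : π(i) > π(i+1)}|`. -/
def desNum {n : ℕ} (π : Equiv.Perm (Fin n)) : ℕ :=
  ((Finset.Icc 1 (n - 1)).filter (fun i => oneLine π (i + 1) < oneLine π i)).card

/-- `asc(π) = |{i ∈ {1,…,n-1} : π(i) < π(i+1)}|`. -/
def ascNum {n : ℕ} (π : Equiv.Perm (Fin n)) : ℕ :=
  ((Finset.Icc 1 (n - 1)).filter (fun i => oneLine π i < oneLine π (i + 1))).card

/-- `inv(π) = |{(i,j) : 1 ≤ i < j ≤ n, π(i) > π(j)}|`. -/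
def invNum {n : ℕ} (π : Equiv.Perm (Fin n)) : ℕ :=
  (((Finset.Icc 1 n) ×ˢ (Finset.Icc 1 n)).filter
    (fun p : ℕ × ℕ => p.1 < p.2 ∧ oneLine π p.2 < oneLine π p.1)).card

section

open Equiv Equiv.Perm

/-- Extend a permutation of `Fin m` to one of `Fin (m + 1)` fixing `0`. -/
def fixZero {m : ℕ} (e : Perm (Fin m)) : Perm (Fin (m + 1)) := decomposeFin.symm (0, e)

@[simp] lemma fixZero_zero {m : ℕ} (e : Perm (Fin m)) : fixZero e 0 = 0 := by
  simp [fixZero]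

@[simp] lemma fixZero_succ {m : ℕ} (e : Perm (Fin m)) (i : Fin m) :
    fixZero e i.succ = (e i).succ := by
  simp [fixZero]

@[simp] lemma sign_fixZero {m : ℕ} (e : Perm (Fin m)) : sign (fixZero e) = sign e := by
  simp [fixZero]

lemma fixZero_injective {m : ℕ} : Function.Injective (fixZero (m := m)) := by
  intro a b h
  simpa [fixZero] using h

lemma exists_fixZero_eq {m : ℕ} (w : Perm (Fin (m + 1))) (hw : w 0 = 0) :
    ∃ e, fixZero e = w := by
  obtain ⟨⟨p, e⟩, rfl⟩ := decomposeFin.symm.surjective w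
  rw [decomposeFin_symm_apply_zero] at hw
  exact ⟨e, by rw [fixZero, hw]⟩

/-- The multiset of maxima of adjacent letters of a word. -/
def wordMax {m : ℕ} (u : Perm (Fin (m + 1))) : Multiset ℕ :=
  univ.val.map fun i : Fin m => max (u i.castSucc : ℕ) (u i.succ)

/-- The multiset of maxima of arguments and values of a permutation, with one-based indexing. -/
def depthMax {m : ℕ} (e : Perm (Fin m)) : Multiset ℕ :=
  univ.val.map fun i : Fin m => max (i : ℕ) (e i) + 1

lemma map_univ_fin_succ {m : ℕ} {β : Type*} (g : Fin (m + 1) → β) :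
    (univ : Finset (Fin (m + 1))).val.map g =
      g 0 ::ₘ (univ : Finset (Fin m)).val.map fun i => g i.succ := by
  simp [Fin.univ_succ, -Fin.univ_val_map]

lemma map_univ_fin_castSucc {m : ℕ} {β : Type*} (g : Fin (m + 1) → β) :
    (univ : Finset (Fin (m + 1))).val.map g =
      g (Fin.last m) ::ₘ (univ : Finset (Fin m)).val.map fun i => g i.castSucc := by
  simp [Fin.univ_castSuccEmb, -Fin.univ_val_map]

lemma wordMax_fixZero {m : ℕ} (e : Perm (Fin (m + 1))) :
    wordMax (fixZero e) = ((e 0 : ℕ) + 1) ::ₘ (wordMax e).map (· + 1) := by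
  simp [wordMax, map_univ_fin_succ, -Fin.univ_val_map, Nat.add_max_add_right]

lemma val_swap_zero_one {m : ℕ} (x : Fin (m + 2)) :
    (swap 0 1 x).val = if x.val = 0 then 1 else if x.val = 1 then 0 else x.val := by
  rw [Equiv.swap_apply_def]
  simp only [Fin.ext_iff, Fin.val_zero, Fin.val_one]
  split_ifs <;> simp

lemma wordMax_swap_mul {m : ℕ} (e : Perm (Fin (m + 2))) :
    wordMax (swap 0 1 * e) = wordMax e := by
  unfold wordMax
  congr 1
  funext i
  have h : (e i.castSucc : ℕ) ≠ e i.succ := by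
    rw [Ne, ← Fin.ext_iff, e.injective.eq_iff]
    exact (Fin.castSucc_lt_succ).ne
  simp only [Perm.mul_apply, val_swap_zero_one]
  split_ifs <;> omega

/-- The part of `depthMax e` coming from nonzero arguments. -/
def depthMaxTail {m : ℕ} (e : Perm (Fin (m + 1))) : Multiset ℕ :=
  univ.val.map fun i : Fin m => max ((i : ℕ) + 1) (e i.succ) + 1

lemma depthMax_eq_cons {m : ℕ} (e : Perm (Fin (m + 1))) :
    depthMax e = ((e 0 : ℕ) + 1) ::ₘ depthMaxTail e := by
  simp [depthMax, depthMaxTail, map_univ_fin_succ, -Fin.univ_val_map]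

lemma depthMaxTail_fixZero {m : ℕ} (e : Perm (Fin m)) :
    depthMaxTail (fixZero e) = (depthMax e).map (· + 1) := by
  simp [depthMax, depthMaxTail, -Fin.univ_val_map, Nat.add_max_add_right]

lemma depthMaxTail_swap_mul {m : ℕ} (e : Perm (Fin (m + 2))) :
    depthMaxTail (swap 0 1 * e) = depthMaxTail e := by
  unfold depthMaxTail
  congr 1
  funext i
  simp only [Perm.mul_apply, val_swap_zero_one]
  split_ifs <;> omega

lemma decomposeFin_symm_one {m : ℕ} (e : Perm (Fin (m + 1))) :
    decomposeFin.symm (1, e) = swap 0 1 * fixZero e := by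
  ext i
  refine Fin.cases ?_ (fun i => ?_) i <;> simp

lemma sum_sign_mul_recursion {m : ℕ} (T Q : Perm (Fin (m + 2)) → Multiset ℕ)
    (T' : Perm (Fin (m + 1)) → Multiset ℕ)
    (hT : ∀ e, T e = ((e 0 : ℕ) + 1) ::ₘ Q e) (hQ : ∀ e, Q (swap 0 1 * e) = Q e)
    (hT' : ∀ e, Q (fixZero e) = (T' e).map (· + 1)) (f : Multiset ℕ → ℤ) :
    ∑ e, (sign e : ℤ) * f (T e) = ∑ e, (sign e : ℤ) *
      (f (1 ::ₘ (T' e).map (· + 1)) - f (2 ::ₘ (T' e).map (· + 1))) := by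
  set S : Perm (Fin (m + 2)) → ℤ := fun e => (sign e : ℤ) * f (T e) with hS
  have hswap : ∑ e, S (swap 0 1 * e) = ∑ e, S e := Equiv.sum_comp (Equiv.mulLeft (swap 0 1)) S
  have hdouble : ∑ e, (S e + S (swap 0 1 * e)) = 2 * ∑ e, (sign e : ℤ) *
      (f (1 ::ₘ (T' e).map (· + 1)) - f (2 ::ₘ (T' e).map (· + 1))) := by
    rw [← decomposeFin.symm.sum_comp, Fintype.sum_prod_type, Fin.sum_univ_succ, Fin.sum_univ_succ,
      Finset.sum_eq_zero (s := univ (α := Fin m)), add_zero, two_mul]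
    · congr 1 <;> refine Finset.sum_congr rfl fun e _ => ?_
      · change S (fixZero e) + S (swap 0 1 * fixZero e) = _
        simp [hS, hT, hQ, hT']
        ring
      · rw [Fin.succ_zero_eq_one, decomposeFin_symm_one, ← mul_assoc, swap_mul_self, one_mul]
        simp [hS, hT, hQ, hT']
        ring
    · intro p _
      refine Finset.sum_eq_zero fun e _ => ?_
      have h0 : decomposeFin.symm (p.succ.succ, e) 0 = p.succ.succ := by simp
      have h1 : swap (0 : Fin (m + 2)) 1 p.succ.succ = p.succ.succ :=
        swap_apply_of_ne_of_ne (Fin.succ_ne_zero _) (by simp [Fin.ext_iff])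
      simp only [hS, hT, hQ, Perm.mul_apply, h0, h1, Perm.sign_mul]
      simp
  rw [Finset.sum_add_distrib, hswap] at hdouble
  linarith

lemma sum_sign_mul_depthMax (m : ℕ) (f : Multiset ℕ → ℤ) :
    ∑ e : Perm (Fin m), (sign e : ℤ) * f (depthMax e) =
      ∑ e : Perm (Fin m), (sign e : ℤ) * f (wordMax (fixZero e)) := by
  match m with
  | 0 => simp [depthMax, wordMax]
  | 1 => simp [depthMax, wordMax]
  | m + 2 =>
    rw [sum_sign_mul_recursion _ _ _ depthMax_eq_cons depthMaxTail_swap_mul depthMaxTail_fixZero,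
      sum_sign_mul_recursion _ (fun e => (wordMax e).map (· + 1)) (fun e => wordMax (fixZero e))
        wordMax_fixZero (fun e => by rw [wordMax_swap_mul]) (fun e => rfl)]
    exact sum_sign_mul_depthMax (m + 1)
      (fun M => f (1 ::ₘ M.map (· + 1)) - f (2 ::ₘ M.map (· + 1)))

/-- Sum of `f` over the multisets obtained from `M` by adding `N`, or by replacing
one element by two copies of `N`. -/
def insertSum (N : ℕ) (f : Multiset ℕ → ℤ) (M : Multiset ℕ) : ℤ :=
  f (N ::ₘ M) + (M.map fun v => f (N ::ₘ N ::ₘ M.erase v)).sum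

/-- The multiset of maxima of adjacent letters of the list `a :: l`. -/
def adjMax : ℕ → List ℕ → Multiset ℕ
  | _, [] => 0
  | a, b :: l => max a b ::ₘ adjMax b l

lemma sum_permutations'Aux_adjMax (N : ℕ) (l : List ℕ) (a : ℕ) (ha : a ≤ N)
    (hl : ∀ b ∈ l, b ≤ N) (f : Multiset ℕ → ℤ) :
    ((l.permutations'Aux N).map fun l' => f (adjMax a l')).sum =
      insertSum N f (adjMax a l) := by
  induction l generalizing a f with
  | nil => simp [adjMax, insertSum, ha]
  | cons b t ih =>
    have hb : b ≤ N := hl b (by simp)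
    have key := ih b hb (fun c hc => hl c (by simp [hc])) fun M => f (max a b ::ₘ M)
    simp only [List.permutations'Aux, List.map_cons, List.map_map, List.sum_cons,
      Function.comp_def, adjMax, insertSum, Multiset.map_cons, Multiset.sum_cons,
      Multiset.erase_cons_head, max_eq_right ha, max_eq_left hb] at key ⊢
    rw [key, Multiset.cons_swap (max a b) N (adjMax b t)]
    have : ((adjMax b t).map fun v => f (max a b ::ₘ N ::ₘ N ::ₘ (adjMax b t).erase v)) =
        (adjMax b t).map fun v => f (N ::ₘ N ::ₘ (max a b ::ₘ adjMax b t).erase v) := by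
      refine Multiset.map_congr rfl fun v hv => ?_
      rw [Multiset.erase_cons_tail_of_mem hv, Multiset.cons_swap, Multiset.cons_swap _ N]
    rw [this]
    ring

/-- The list `[m, …, 1]`. -/
def descList : ℕ → List ℕ
  | 0 => []
  | m + 1 => (m + 1) :: descList m

lemma mem_descList {m x : ℕ} : x ∈ descList m ↔ 1 ≤ x ∧ x ≤ m := by
  induction m with
  | zero => simp [descList]; omega
  | succ m ih => simp [descList, ih]; omega

lemma nodup_descList (m : ℕ) : (descList m).Nodup := by
  induction m with
  | zero => simp [descList]
  | succ m ih => simp [descList, ih, mem_descList]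

lemma sum_permutations'_adjMax (m : ℕ) (f : Multiset ℕ → ℤ) :
    ((descList (m + 1)).permutations'.map fun l => f (adjMax 0 l)).sum =
      ((descList m).permutations'.map fun l => insertSum (m + 1) f (adjMax 0 l)).sum := by
  rw [descList, List.permutations', List.map_flatMap, List.flatMap_def, List.sum_flatten,
    List.map_map]
  congr 1
  refine List.map_congr_left fun l hl => ?_
  refine sum_permutations'Aux_adjMax _ _ _ (Nat.zero_le _) (fun b hb => ?_) f
  have := mem_descList.1 ((List.mem_permutations'.1 hl).subset hb)
  omega

lemma map_univ_max_eq_adjMax {m : ℕ} (g : Fin (m + 1) → ℕ) :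
    (univ.val.map fun i : Fin m => max (g i.castSucc) (g i.succ)) =
      adjMax (g 0) (List.ofFn fun i : Fin m => g i.succ) := by
  induction m with
  | zero => simp [adjMax]
  | succ m ih =>
    rw [map_univ_fin_succ, List.ofFn_succ, adjMax]
    exact congrArg _ (ih fun i => g i.succ)

/-- The list of values of a permutation, with one-based values. -/
def wordList {m : ℕ} (e : Perm (Fin m)) : List ℕ := List.ofFn fun i => (e i : ℕ) + 1

lemma wordMax_fixZero_eq_adjMax {m : ℕ} (e : Perm (Fin m)) :
    wordMax (fixZero e) = adjMax 0 (wordList e) := by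
  simpa [wordList, wordMax, -Fin.univ_val_map] using
    map_univ_max_eq_adjMax fun i => (fixZero e i : ℕ)

lemma wordList_injective {m : ℕ} : Function.Injective (wordList (m := m)) := by
  intro a b h
  ext i
  simpa using congrFun (List.ofFn_injective h) i

lemma wordList_perm {m : ℕ} (e : Perm (Fin m)) : (wordList e).Perm (descList m) := by
  refine (List.perm_ext_iff_of_nodup ?_ (nodup_descList m)).2 fun x => ?_
  · refine List.nodup_ofFn.2 fun i j h => e.injective (Fin.ext ?_)
    simpa using h
  · rw [mem_descList, wordList, List.mem_ofFn]
    constructor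
    · rintro ⟨i, rfl⟩
      have := (e i).isLt
      omega
    · rintro ⟨h1, h2⟩
      exact ⟨e.symm ⟨x - 1, by omega⟩, by simp; omega⟩

lemma sum_wordMax_fixZero {m : ℕ} (f : Multiset ℕ → ℤ) :
    ∑ e : Perm (Fin m), f (wordMax (fixZero e)) =
      ((descList m).permutations'.map fun l => f (adjMax 0 l)).sum := by
  have hnodup : (descList m).permutations'.Nodup :=
    (List.permutations_perm_permutations' _).nodup_iff.1 (List.nodup_permutations _ (nodup_descList m))
  have himage : univ.image (wordList (m := m)) = (descList m).permutations'.toFinset := by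
    refine Finset.eq_of_subset_of_card_le (fun l hl => ?_) ?_
    · obtain ⟨e, -, rfl⟩ := Finset.mem_image.1 hl
      simpa using wordList_perm e
    · rw [Finset.card_image_of_injective _ wordList_injective, List.toFinset_card_of_nodup hnodup,
        ← (List.permutations_perm_permutations' _).length_eq, List.length_permutations,
        ← (wordList_perm 1).length_eq]
      simp [wordList, Fintype.card_perm]
  rw [← List.sum_toFinset _ hnodup, ← himage, Finset.sum_image wordList_injective.injOn]
  simp_rw [wordMax_fixZero_eq_adjMax]

/-- Build a permutation of `Fin (m + 1)` by inserting the last element into a cycle of `e`,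
right before the given value, or as a fixed point. -/
def insertLast {m : ℕ} : Option (Fin m) × Perm (Fin m) ≃ Perm (Fin (m + 1)) :=
  decomposeOption.symm.trans (permCongr finSuccEquivLast.symm)

lemma insertLast_none_last {m : ℕ} (e : Perm (Fin m)) :
    insertLast (none, e) (Fin.last m) = Fin.last m := by
  simp [insertLast]

lemma insertLast_none_castSucc {m : ℕ} (e : Perm (Fin m)) (i : Fin m) :
    insertLast (none, e) i.castSucc = (e i).castSucc := by
  simp [insertLast]

lemma insertLast_some_last {m : ℕ} (e : Perm (Fin m)) (x : Fin m) :
    insertLast (some x, e) (Fin.last m) = x.castSucc := by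
  simp [insertLast]

lemma insertLast_some_castSucc {m : ℕ} (e : Perm (Fin m)) (x i : Fin m) :
    insertLast (some x, e) i.castSucc = if e i = x then Fin.last m else (e i).castSucc := by
  by_cases h : e i = x <;> simp [insertLast, swap_apply_def, h]

lemma depthMax_insertLast_none {m : ℕ} (e : Perm (Fin m)) :
    depthMax (insertLast (none, e)) = (m + 1) ::ₘ depthMax e := by
  simp [depthMax, map_univ_fin_castSucc, -Fin.univ_val_map, insertLast_none_last,
    insertLast_none_castSucc]

lemma depthMax_insertLast_some {m : ℕ} (e : Perm (Fin m)) (j : Fin m) :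
    depthMax (insertLast (some (e j), e)) =
      (m + 1) ::ₘ (m + 1) ::ₘ (depthMax e).erase (max (j : ℕ) (e j) + 1) := by
  have huniv : (univ : Finset (Fin m)).val = j ::ₘ (univ.erase j).val := by
    rw [← Finset.insert_val_of_notMem (Finset.notMem_erase j univ), Finset.insert_erase (mem_univ j)]
  simp only [depthMax, map_univ_fin_castSucc, insertLast_some_last, insertLast_some_castSucc]
  rw [huniv, Multiset.map_cons, Multiset.map_cons, Multiset.erase_cons_head]
  congr 1
  · simp [(e j).isLt.le]
  · congr 1
    · simp [j.isLt.le]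
    · refine Multiset.map_congr rfl fun i hi => ?_
      have : i ≠ j := Finset.ne_of_mem_erase (Finset.mem_def.2 hi)
      simp [this]

lemma sum_depthMax_succ (m : ℕ) (f : Multiset ℕ → ℤ) :
    ∑ e : Perm (Fin (m + 1)), f (depthMax e) =
      ∑ e : Perm (Fin m), insertSum (m + 1) f (depthMax e) := by
  rw [← insertLast.sum_comp, Fintype.sum_prod_type_right]
  refine Finset.sum_congr rfl fun e _ => ?_
  rw [Fintype.sum_option, depthMax_insertLast_none, insertSum, ← Equiv.sum_comp e]
  simp_rw [depthMax_insertLast_some]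
  congr 1
  conv_rhs => rw [depthMax]
  rw [Multiset.map_map]
  rfl

lemma sum_depthMax (m : ℕ) (f : Multiset ℕ → ℤ) :
    ∑ e : Perm (Fin m), f (depthMax e) = ∑ e : Perm (Fin m), f (wordMax (fixZero e)) := by
  rw [sum_wordMax_fixZero]
  induction m generalizing f with
  | zero => simp [depthMax, descList, adjMax]
  | succ m ih => rw [sum_depthMax_succ, ih, sum_permutations'_adjMax]

lemma exists_equiv_of_card_fiber_eq {α β : Type*} [Fintype α] [DecidableEq β] (a b : α → β)
    (h : ∀ y, #{x | a x = y} = #{x | b x = y}) : ∃ e : α ≃ α, ∀ x, b (e x) = a x := by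
  have hfib (y : β) : Nonempty ({x // a x = y} ≃ {x // b x = y}) := by
    refine ⟨Fintype.equivOfCardEq ?_⟩
    rw [Fintype.card_subtype, Fintype.card_subtype, h]
  let E (y : β) := (hfib y).some
  refine ⟨(sigmaFiberEquiv a).symm.trans ((Equiv.sigmaCongrRight E).trans (sigmaFiberEquiv b)),
    fun x => ?_⟩
  exact (E (a x) ⟨x, rfl⟩).2

lemma two_mul_card_sign_fiber {α β : Type*} [Fintype α] [DecidableEq β] (a : α → β)
    (s : α → ℤˣ) (y : β) (t : ℤˣ) :
    2 * (#{x | (a x, s x) = (y, t)} : ℤ) =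
      ∑ x, (if a x = y then 1 else 0) + t * ∑ x, (s x : ℤ) * if a x = y then 1 else 0 := by
  rw [Finset.card_filter, Nat.cast_sum, Finset.mul_sum, Finset.mul_sum, ← Finset.sum_add_distrib]
  refine Finset.sum_congr rfl fun x _ => ?_
  rcases Int.units_eq_one_or (s x) with h | h <;> rcases Int.units_eq_one_or t with h' | h' <;>
    by_cases h'' : a x = y <;> simp [h, h', h'']

lemma exists_equiv_depthMax_wordMax (m : ℕ) : ∃ E : Perm (Fin m) ≃ Perm (Fin m),
    ∀ e, wordMax (fixZero (E e)) = depthMax e ∧ sign (E e) = sign e := by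
  obtain ⟨E, hE⟩ := exists_equiv_of_card_fiber_eq
    (fun e : Perm (Fin m) => (depthMax e, sign e)) (fun e => (wordMax (fixZero e), sign e)) (by
      rintro ⟨M, t⟩
      have h1 := two_mul_card_sign_fiber (fun e : Perm (Fin m) => depthMax e) sign M t
      have h2 := two_mul_card_sign_fiber (fun e : Perm (Fin m) => wordMax (fixZero e)) sign M t
      rw [sum_depthMax m fun N => if N = M then 1 else 0,
        sum_sign_mul_depthMax m fun N => if N = M then 1 else 0, ← h2] at h1
      exact_mod_cast mul_left_cancel₀ two_ne_zero h1)
  exact ⟨E, fun e => by simpa using hE e⟩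

lemma prod_Icc_one_eq_prod_fin {M : Type*} [CommMonoid M] (n : ℕ) (F : ℕ → M) :
    ∏ k ∈ Icc 1 n, F k = ∏ i : Fin n, F (i + 1) := by
  rw [Fin.prod_univ_eq_prod_range fun i => F (i + 1), Finset.range_eq_Ico,
    Finset.prod_Ico_add' F 0 n 1]
  rfl

lemma sum_Icc_one_eq_sum_fin (n : ℕ) (F : ℕ → ℕ) :
    ∑ k ∈ Icc 1 n, F k = ∑ i : Fin n, F (i + 1) :=
  prod_Icc_one_eq_prod_fin (M := Multiplicative ℕ) n F

lemma oneLine_val_add_one {n : ℕ} (w : Perm (Fin n)) (i : Fin n) :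
    oneLine w (i + 1) = (w i : ℕ) + 1 := by
  simp [oneLine]

lemma neg_one_pow_invNum {n : ℕ} (w : Perm (Fin n)) : (-1 : ℤ) ^ invNum w = sign w := by
  have : ((-1 : ℤ) ^ invNum w) = ∏ p ∈ Icc 1 n ×ˢ Icc 1 n,
      if p.1 < p.2 ∧ oneLine w p.2 < oneLine w p.1 then -1 else 1 := by
    rw [Finset.prod_ite]
    simp [invNum]
  rw [this, Finset.prod_product_right, prod_Icc_one_eq_prod_fin, sign_eq_prod_prod_Iio]
  push_cast
  refine Finset.prod_congr rfl fun j _ => ?_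
  rw [prod_Icc_one_eq_prod_fin, ← Finset.filter_gt_eq_Iio, Finset.prod_filter]
  refine Finset.prod_congr rfl fun i _ => ?_
  simp only [oneLine_val_add_one, Nat.add_lt_add_iff_right, Fin.lt_def]
  by_cases h : i < j
  · have : (w i : ℕ) ≠ w j := by
      rw [Ne, ← Fin.ext_iff, w.injective.eq_iff]
      exact h.ne
    split_ifs <;> first | rfl | omega
  · split_ifs <;> first | rfl | omega

lemma depthStat_fixZero_add {m : ℕ} (e : Perm (Fin m)) :
    depthStat (fixZero e) + ∑ i : Fin m, ((i : ℕ) + 1) = (depthMax e).sum := by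
  rw [depthStat, Finset.sum_filter, sum_Icc_one_eq_sum_fin, Fin.sum_univ_succ, depthMax,
    oneLine_val_add_one, fixZero_zero, if_neg (by simp), zero_add, ← Finset.sum_add_distrib]
  refine Finset.sum_congr rfl fun i _ => ?_
  rw [oneLine_val_add_one, fixZero_succ]
  simp only [Fin.val_succ]
  split_ifs <;> omega

lemma drpStat_fixZero_add {m : ℕ} (e : Perm (Fin m)) :
    drpStat (fixZero e) + ∑ i : Fin m, ((i : ℕ) + 1) = (wordMax (fixZero e)).sum := by
  rw [drpStat, Finset.sum_filter, Nat.add_sub_cancel, sum_Icc_one_eq_sum_fin,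
    ← Equiv.sum_comp e fun i => (i : ℕ) + 1, wordMax, ← Finset.sum_add_distrib]
  refine Finset.sum_congr rfl fun i _ => ?_
  have h1 := oneLine_val_add_one (fixZero e) i.castSucc
  have h2 := oneLine_val_add_one (fixZero e) i.succ
  have h3 : (fixZero e i.succ : ℕ) = e i + 1 := by simp
  simp only [Fin.val_castSucc, Fin.val_succ] at h1 h2
  rw [h1, h2]
  split_ifs <;> omega

end

/-- on A₁ = {w : w(1) = 1} there is a sign-preserving bijection
carrying depth to drp. -/
theorem stmt13 (n : ℕ) (hn : 0 < n) :
    ∃ Ψ : {w : Equiv.Perm (Fin n) // oneLine w 1 = 1} →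
          {w : Equiv.Perm (Fin n) // oneLine w 1 = 1},
      Function.Bijective Ψ ∧
        ∀ w : {w : Equiv.Perm (Fin n) // oneLine w 1 = 1},
          ((-1 : ℤ) ^ invNum (Ψ w).1 = (-1 : ℤ) ^ invNum w.1) ∧
          depthStat w.1 = drpStat (Ψ w).1 := by
  obtain ⟨m, rfl⟩ := Nat.exists_eq_succ_of_ne_zero hn.ne'
  have hmem (e : Equiv.Perm (Fin m)) : oneLine (fixZero e) 1 = 1 := by
    simpa using oneLine_val_add_one (fixZero e) 0
  have hlift : Function.Bijective fun e : Equiv.Perm (Fin m) =>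
      (⟨fixZero e, hmem e⟩ : {w : Equiv.Perm (Fin (m + 1)) // oneLine w 1 = 1}) := by
    refine ⟨fun a b h => fixZero_injective (congrArg Subtype.val h), fun ⟨w, hw⟩ => ?_⟩
    have h0 := oneLine_val_add_one w 0
    obtain ⟨e, rfl⟩ := exists_fixZero_eq w (Fin.ext (by simp [hw] at h0; simpa using h0))
    exact ⟨e, rfl⟩
  obtain ⟨E, hE⟩ := exists_equiv_depthMax_wordMax m
  let L := Equiv.ofBijective _ hlift
  refine ⟨fun w => L (E (L.symm w)), (L.bijective.comp E.bijective).comp L.symm.bijective,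
    fun w => ?_⟩
  obtain ⟨e, rfl⟩ := L.surjective w
  have hL : L (E (L.symm (L e))) = L (E e) := by rw [L.symm_apply_apply]
  simp only [hL]
  change (-1 : ℤ) ^ invNum (fixZero (E e)) = (-1 : ℤ) ^ invNum (fixZero e) ∧
    depthStat (fixZero e) = drpStat (fixZero (E e))
  refine ⟨?_, ?_⟩
  · rw [neg_one_pow_invNum, neg_one_pow_invNum, sign_fixZero, sign_fixZero, (hE e).2]
  · have h1 := depthStat_fixZero_add e
    have h2 := drpStat_fixZero_add (E e)
    rw [(hE e).1] at h2
    omega
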